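/- Let p be a positive integer, and let λ ∈ X⁺ ∩ C̄_ℤ with λ = w·0 + pσ for some w ∈ W and σ ∈ X. Then for every simple root α ∈ Δ one has (w⁻¹·λ, α∨) ≤ 0 and (w⁻¹σ, α∨) ≤ 0; that is, w⁻¹·λ and w⁻¹σ are antidominant. -/

import Mathlib

/-!
The hypothesis `λ = w·0 + pσ` says `w⁻¹·λ = p w⁻¹σ`, so the two claims are equivalent. For a simple
root `α`, invariance of the pairing under `w` gives `(w⁻¹·λ, α∨) = (λ + ρ, (wα)∨) - (ρ, α∨)`. Since
`wα` is a root and `λ` lies in the closed alcove, the first term is at most `p`, while `(ρ, α∨) = 1`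
because the reflection in `α` permutes the positive roots other than `α`. Hence
`p (w⁻¹σ, α∨) ≤ p - 1`, and the integer `(w⁻¹σ, α∨)` is at most `0`.
-/

open scoped RealInnerProductSpace

namespace PaperDNN

variable {E : Type*} [NormedAddCommGroup E] [InnerProductSpace ℝ E]

/-- The coroot pairing `⟨x, α∨⟩ = 2⟪x,α⟫/⟪α,α⟫`. -/
noncomputable def pair (x a : E) : ℝ := 2 * ⟪x, a⟫ / ⟪a, a⟫

/-- `Φ` is a reduced irreducible root system in the Euclidean space `E`. -/
structure IsRootSystem (Φ : Finset E) : Prop where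
  nonempty : Φ.Nonempty
  ne_zero : ∀ α ∈ Φ, α ≠ 0
  span_top : Submodule.span ℝ (Φ : Set E) = ⊤
  reduced : ∀ α ∈ Φ, ∀ t : ℝ, t • α ∈ Φ → t = 1 ∨ t = -1
  reflect_mem : ∀ α ∈ Φ, ∀ β ∈ Φ, β - pair β α • α ∈ Φ
  pair_int : ∀ α ∈ Φ, ∀ β ∈ Φ, ∃ n : ℤ, pair β α = (n : ℝ)
  irred : ∀ S T : Set E, S ∪ T = (Φ : Set E) → S.Nonempty → T.Nonempty →
      (∀ a ∈ S, ∀ b ∈ T, ⟪a, b⟫ = 0) → False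

/-- `Δ` is a base of simple roots for `Φ`: every root is a nonnegative or
nonpositive integral combination of the simple roots. -/
structure IsBase (Φ Δ : Finset E) : Prop where
  subset : Δ ⊆ Φ
  indep : LinearIndependent ℝ (fun a : {x // x ∈ Δ} => (a : E))
  root_decomp : ∀ β ∈ Φ, (∃ c : E → ℕ, β = ∑ α ∈ Δ, (c α : ℝ) • α) ∨
      (∃ c : E → ℕ, β = -(∑ α ∈ Δ, (c α : ℝ) • α))

open Classical in
/-- The positive roots `Φ⁺` of `Φ` with respect to the base `Δ`. -/
noncomputable def posRoots (Φ Δ : Finset E) : Finset E :=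
  Φ.filter fun β => ∃ c : E → ℕ, β = ∑ α ∈ Δ, (c α : ℝ) • α

/-- `ρ`, one-half the sum of the positive roots. -/
noncomputable def rho (Φ Δ : Finset E) : E := (2⁻¹ : ℝ) • ∑ β ∈ posRoots Φ Δ, β

/-- The Weyl group of `Φ`, the subgroup of `GL(E)` generated by the reflections
`s_α : x ↦ x − ⟨x,α∨⟩α` in the roots `α ∈ Φ`.  Applied to a subset `J` of the
simple roots it yields the parabolic subgroup `W_J`. -/
def Weyl (Φ : Finset E) : Subgroup (E ≃ₗ[ℝ] E) :=
  Subgroup.closure { w : E ≃ₗ[ℝ] E | ∃ α ∈ Φ, ∀ x, w x = x - pair x α • α }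

/-- The dot action `w·λ = w(λ+ρ) − ρ`. -/
noncomputable def dotAct (Φ Δ : Finset E) (w : E ≃ₗ[ℝ] E) (lam : E) : E :=
  w (lam + rho Φ Δ) - rho Φ Δ

/-- The weight lattice `X = {λ ∈ E : ⟨λ,α∨⟩ ∈ ℤ for all α ∈ Φ}`. -/
def weightLattice (Φ : Finset E) : Set E :=
  { lam | ∀ α ∈ Φ, ∃ n : ℤ, pair lam α = (n : ℝ) }

/-- The root lattice `ℤΦ`. -/
def rootLattice (Φ : Finset E) : AddSubgroup E := AddSubgroup.closure (Φ : Set E)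

/-- The bottom `p`-alcove `C_ℤ = {λ ∈ X : 0 < ⟨λ+ρ,β∨⟩ < p for all β ∈ Φ⁺}`. -/
def bottomAlcove (Φ Δ : Finset E) (p : ℕ) : Set E :=
  { lam ∈ weightLattice Φ | ∀ β ∈ posRoots Φ Δ,
      0 < pair (lam + rho Φ Δ) β ∧ pair (lam + rho Φ Δ) β < (p : ℝ) }

/-- The closure `C̄_ℤ = {λ ∈ X : 0 ≤ ⟨λ+ρ,β∨⟩ ≤ p for all β ∈ Φ⁺}` of the
bottom `p`-alcove. -/
def closedAlcove (Φ Δ : Finset E) (p : ℕ) : Set E :=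
  { lam ∈ weightLattice Φ | ∀ β ∈ posRoots Φ Δ,
      0 ≤ pair (lam + rho Φ Δ) β ∧ pair (lam + rho Φ Δ) β ≤ (p : ℝ) }

/-- Membership in `X⁺`, the set of dominant weights. -/
def isDominant (Φ Δ : Finset E) (lam : E) : Prop :=
  lam ∈ weightLattice Φ ∧ ∀ α ∈ Δ, 0 ≤ pair lam α

/-- `a₀` is the highest short root of `Φ`: a root of minimal length such that
every root of the same length is `≤ a₀` (their difference is a nonnegative
integral combination of simple roots). -/
structure IsHighestShortRoot (Φ Δ : Finset E) (a₀ : E) : Prop where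
  mem : a₀ ∈ Φ
  short : ∀ β ∈ Φ, ⟪a₀, a₀⟫ ≤ ⟪β, β⟫
  highest : ∀ β ∈ Φ, ⟪β, β⟫ = ⟪a₀, a₀⟫ →
      ∃ c : E → ℕ, a₀ - β = ∑ α ∈ Δ, (c α : ℝ) • α

open Submodule

section Pairing

theorem pair_add (x y a : E) : pair (x + y) a = pair x a + pair y a := by
  simp only [pair, inner_add_left, mul_add, add_div]

theorem pair_smul (t : ℝ) (x a : E) : pair (t • x) a = t * pair x a := by
  simp only [pair, real_inner_smul_left]
  ring

theorem pair_sum {ι : Type*} (s : Finset ι) (f : ι → E) (a : E) :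
    pair (∑ i ∈ s, f i) a = ∑ i ∈ s, pair (f i) a := by
  simp only [pair, sum_inner, Finset.mul_sum, Finset.sum_div]

theorem pair_neg_right (x a : E) : pair x (-a) = -pair x a := by
  simp only [pair, inner_neg_right, inner_neg_left, neg_neg, mul_neg, neg_div]

theorem pair_self {a : E} (ha : a ≠ 0) : pair a a = 2 :=
  mul_div_cancel_right₀ 2 (inner_self_ne_zero.mpr ha)

theorem sub_pair_smul_eq_reflection (x a : E) : x - pair x a • a = (ℝ ∙ a)ᗮ.reflection x := by
  rw [reflection_orthogonal_apply, reflection_singleton_apply, pair, real_inner_comm,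
    real_inner_self_eq_norm_sq]
  simp only [RCLike.ofReal_real_eq_id, id_eq]
  module

theorem pair_reflection (x a : E) : pair ((ℝ ∙ a)ᗮ.reflection x) a = -pair x a := by
  have hinner := (ℝ ∙ a)ᗮ.reflection.inner_map_map x a
  rw [reflection_orthogonalComplement_singleton_eq_neg, inner_neg_right] at hinner
  rw [pair, pair, ← hinner, mul_neg, neg_div, neg_neg]

end Pairing

section RootSystem

/-- A root system in the sense of the theory of finite reflection groups: a finite set of nonzero
vectors which is reduced and stable under its own reflections. It need not span `E`, be irreducible,
or have integral pairings. -/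
structure IsReducedRootSystem (Φ : Finset E) : Prop where
  ne_zero : ∀ α ∈ Φ, α ≠ 0
  reduced : ∀ α ∈ Φ, ∀ t : ℝ, t • α ∈ Φ → t = 1 ∨ t = -1
  reflection_mem : ∀ α ∈ Φ, ∀ β ∈ Φ, (ℝ ∙ α)ᗮ.reflection β ∈ Φ

variable {Φ : Finset E} {α β : E} {w : E ≃ₗ[ℝ] E}

theorem IsRootSystem.isReducedRootSystem (hΦ : IsRootSystem Φ) : IsReducedRootSystem Φ where
  ne_zero := hΦ.ne_zero
  reduced := hΦ.reduced
  reflection_mem α hα β hβ := sub_pair_smul_eq_reflection β α ▸ hΦ.reflect_mem α hα β hβ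

theorem IsReducedRootSystem.neg_mem (hΦ : IsReducedRootSystem Φ) (hβ : β ∈ Φ) : -β ∈ Φ :=
  reflection_orthogonalComplement_singleton_eq_neg (𝕜 := ℝ) β ▸ hΦ.reflection_mem β hβ β hβ

theorem IsReducedRootSystem.reflection_mem_iff (hΦ : IsReducedRootSystem Φ) (hα : α ∈ Φ) :
    (ℝ ∙ α)ᗮ.reflection β ∈ Φ ↔ β ∈ Φ :=
  ⟨fun h => reflection_reflection (ℝ ∙ α)ᗮ β ▸ hΦ.reflection_mem α hα _ h,
    hΦ.reflection_mem α hα β⟩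

theorem inner_apply_apply_of_mem_weyl (hw : w ∈ Weyl Φ) (x y : E) : ⟪w x, w y⟫ = ⟪x, y⟫ := by
  induction hw using Subgroup.closure_induction generalizing x y with
  | mem s hs =>
    obtain ⟨α, -, hs⟩ := hs
    simp only [hs, sub_pair_smul_eq_reflection, LinearIsometryEquiv.inner_map_map]
  | one => rfl
  | mul u v _ _ hu hv => exact (hu _ _).trans (hv _ _)
  | inv u _ hu => exact (hu _ _).symm.trans (by simp)

theorem IsReducedRootSystem.weyl_apply_mem_iff (hΦ : IsReducedRootSystem Φ) (hw : w ∈ Weyl Φ) :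
    w β ∈ Φ ↔ β ∈ Φ := by
  induction hw using Subgroup.closure_induction generalizing β with
  | mem s hs =>
    obtain ⟨α, hα, hs⟩ := hs
    rw [hs, sub_pair_smul_eq_reflection, hΦ.reflection_mem_iff hα]
  | one => rfl
  | mul u v _ _ hu hv => exact hu.trans hv
  | inv u _ hu => exact hu.symm.trans (by simp)

theorem pair_symm_apply_of_mem_weyl (hw : w ∈ Weyl Φ) (x a : E) :
    pair (w.symm x) a = pair x (w a) := by
  rw [pair, pair, ← inner_apply_apply_of_mem_weyl hw, w.apply_symm_apply,
    inner_apply_apply_of_mem_weyl hw a a]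

end RootSystem

section Base

variable {Φ Δ : Finset E} {α β : E}

theorem mem_posRoots :
    β ∈ posRoots Φ Δ ↔ β ∈ Φ ∧ ∃ c : E → ℕ, β = ∑ α ∈ Δ, (c α : ℝ) • α := by
  simp only [posRoots, Finset.mem_filter]

theorem IsBase.subset_posRoots (hΔ : IsBase Φ Δ) : Δ ⊆ posRoots Φ Δ := by
  classical
  exact fun α hα =>
    mem_posRoots.mpr ⟨hΔ.subset hα, Pi.single α 1, by simp [Pi.single_apply, hα]⟩

theorem IsBase.mem_posRoots_or_neg_mem (hΦ : IsReducedRootSystem Φ) (hΔ : IsBase Φ Δ)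
    (hβ : β ∈ Φ) : β ∈ posRoots Φ Δ ∨ -β ∈ posRoots Φ Δ :=
  (hΔ.root_decomp β hβ).imp (fun hc => mem_posRoots.mpr ⟨hβ, hc⟩)
    fun ⟨c, hc⟩ => mem_posRoots.mpr ⟨hΦ.neg_mem hβ, c, neg_eq_iff_eq_neg.mpr hc⟩

/-- The coordinates of a vector with respect to a linearly independent set `Δ` (the simple roots).
Off the span of `Δ` they are given by an arbitrary linear extension; if `Δ` is linearly dependent
they are the junk value `0`. -/
noncomputable def simpleCoeff (Δ : Finset E) : E →ₗ[ℝ] (Δ →₀ ℝ) :=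
  (Finsupp.linearCombination ℝ ((↑) : Δ → E)).leftInverse

theorem IsBase.simpleCoeff_coe (hΔ : IsBase Φ Δ) (δ : Δ) :
    simpleCoeff Δ δ = Finsupp.single δ 1 := by
  have h := LinearMap.leftInverse_apply_of_inj (LinearMap.ker_eq_bot.mpr hΔ.indep)
    (Finsupp.single δ 1)
  rwa [Finsupp.linearCombination_single, one_smul] at h

theorem IsBase.simpleCoeff_sum (hΔ : IsBase Φ Δ) (c : E → ℝ) (γ : Δ) :
    simpleCoeff Δ (∑ δ ∈ Δ, c δ • δ) γ = c γ := by
  classical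
  rw [← Finset.sum_coe_sort]
  simp [hΔ.simpleCoeff_coe, Finsupp.finsetSum_apply, Finsupp.single_apply]

theorem IsBase.simpleCoeff_reflection (hΔ : IsBase Φ Δ) {α γ : Δ} (hγ : γ ≠ α) (x : E) :
    simpleCoeff Δ ((ℝ ∙ (α : E))ᗮ.reflection x) γ = simpleCoeff Δ x γ := by
  simp [← sub_pair_smul_eq_reflection, hΔ.simpleCoeff_coe, Finsupp.single_eq_of_ne hγ]

theorem IsBase.mem_posRoots_of_simpleCoeff_pos (hΔ : IsBase Φ Δ) (hβ : β ∈ Φ) {γ : Δ}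
    (hγ : 0 < simpleCoeff Δ β γ) : β ∈ posRoots Φ Δ := by
  refine mem_posRoots.mpr ⟨hβ, (hΔ.root_decomp β hβ).resolve_right ?_⟩
  rintro ⟨c, rfl⟩
  rw [map_neg, Finsupp.neg_apply, hΔ.simpleCoeff_sum (fun δ => (c δ : ℝ)), neg_pos] at hγ
  exact hγ.not_ge (Nat.cast_nonneg _)

theorem IsBase.exists_simpleCoeff_pos (hΦ : IsReducedRootSystem Φ) (hΔ : IsBase Φ Δ) (hα : α ∈ Δ)
    (hβ : β ∈ posRoots Φ Δ) (hne : β ≠ α) : ∃ γ : Δ, (γ : E) ≠ α ∧ 0 < simpleCoeff Δ β γ := by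
  obtain ⟨hβΦ, c, hc⟩ := mem_posRoots.mp hβ
  by_contra! hle
  have hc_zero : ∀ γ ∈ Δ, γ ≠ α → (c γ : ℝ) = 0 := fun γ hγ hγα => by
    have h := hle ⟨γ, hγ⟩ hγα
    rw [hc, hΔ.simpleCoeff_sum (fun δ => (c δ : ℝ))] at h
    exact h.antisymm (Nat.cast_nonneg _)
  have hβα : β = (c α : ℝ) • α := by
    rw [hc]
    exact Finset.sum_eq_single_of_mem α hα fun γ hγ hγα => by rw [hc_zero γ hγ hγα, zero_smul]
  rcases hΦ.reduced α (hΔ.subset hα) (c α) (hβα ▸ hβΦ) with h | h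
  · exact hne (by rw [hβα, h, one_smul])
  · linarith [(c α).cast_nonneg (α := ℝ)]

-- A positive root other than `α` has a positive coefficient at some simple `γ ≠ α`, and the
-- reflection in `α` changes only the coefficient at `α`.
theorem IsBase.reflection_mem_posRoots_erase [DecidableEq E] (hΦ : IsReducedRootSystem Φ)
    (hΔ : IsBase Φ Δ) (hα : α ∈ Δ) (hβ : β ∈ (posRoots Φ Δ).erase α) :
    (ℝ ∙ α)ᗮ.reflection β ∈ (posRoots Φ Δ).erase α := by
  obtain ⟨hne, hβ⟩ := Finset.mem_erase.mp hβ
  obtain ⟨γ, hγα, hγ⟩ := hΔ.exists_simpleCoeff_pos hΦ hα hβ hne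
  have hγα : γ ≠ ⟨α, hα⟩ := fun h => hγα (congrArg Subtype.val h)
  rw [← hΔ.simpleCoeff_reflection hγα] at hγ
  refine Finset.mem_erase.mpr ⟨fun h => hγ.ne' ?_, hΔ.mem_posRoots_of_simpleCoeff_pos ?_ hγ⟩
  · rw [h, hΔ.simpleCoeff_coe ⟨α, hα⟩, Finsupp.single_eq_of_ne hγα]
  · exact hΦ.reflection_mem α (hΔ.subset hα) β (mem_posRoots.mp hβ).1

theorem IsBase.sum_pair_posRoots_erase [DecidableEq E] (hΦ : IsReducedRootSystem Φ)
    (hΔ : IsBase Φ Δ) (hα : α ∈ Δ) : ∑ β ∈ (posRoots Φ Δ).erase α, pair β α = 0 := by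
  refine Finset.sum_involution (fun β _ => (ℝ ∙ α)ᗮ.reflection β) (fun β _ => ?_)
    (fun β _ hβ hfix => hβ ?_) (fun β hβ => hΔ.reflection_mem_posRoots_erase hΦ hα hβ)
    fun β _ => reflection_reflection _ β
  · rw [pair_reflection, add_neg_cancel]
  · exact self_eq_neg.mp (by rw [← pair_reflection, hfix])

theorem IsBase.pair_rho (hΦ : IsReducedRootSystem Φ) (hΔ : IsBase Φ Δ) (hα : α ∈ Δ) :
    pair (rho Φ Δ) α = 1 := by
  classical
  rw [rho, pair_smul, pair_sum, ← Finset.add_sum_erase _ _ (hΔ.subset_posRoots hα),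
    hΔ.sum_pair_posRoots_erase hΦ hα, pair_self (hΦ.ne_zero α (hΔ.subset hα)), add_zero,
    inv_mul_cancel₀ two_ne_zero]

end Base

section Alcove

variable {Φ Δ : Finset E} {p : ℕ} {lam α β : E} {w : E ≃ₗ[ℝ] E}

theorem pair_add_rho_le_of_mem_closedAlcove (hΦ : IsReducedRootSystem Φ) (hΔ : IsBase Φ Δ)
    (hlam : lam ∈ closedAlcove Φ Δ p) (hβ : β ∈ Φ) : pair (lam + rho Φ Δ) β ≤ p := by
  rcases hΔ.mem_posRoots_or_neg_mem hΦ hβ with hpos | hneg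
  · exact (hlam.2 β hpos).2
  · have h := (hlam.2 (-β) hneg).1
    rw [pair_neg_right, neg_nonneg] at h
    exact h.trans p.cast_nonneg

theorem dotAct_symm_dotAct_add (Φ Δ : Finset E) (w : E ≃ₗ[ℝ] E) (μ τ : E) :
    dotAct Φ Δ w.symm (dotAct Φ Δ w μ + τ) = μ + w.symm τ := by
  simp only [dotAct, map_add, map_sub, w.symm_apply_apply]
  abel

theorem pair_dotAct_symm_add_one (hΦ : IsReducedRootSystem Φ) (hΔ : IsBase Φ Δ) (hw : w ∈ Weyl Φ)
    (hα : α ∈ Δ) (lam : E) :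
    pair (dotAct Φ Δ w.symm lam) α + 1 = pair (lam + rho Φ Δ) (w α) := by
  rw [← hΔ.pair_rho hΦ hα, ← pair_add, dotAct, sub_add_cancel, pair_symm_apply_of_mem_weyl hw]

theorem statement11_general {σ : E} (hΦ : IsReducedRootSystem Φ) (hΔ : IsBase Φ Δ)
    (halc : lam ∈ closedAlcove Φ Δ p) (hw : w ∈ Weyl Φ) (hσ : σ ∈ weightLattice Φ)
    (hlink : lam = dotAct Φ Δ w 0 + (p : ℝ) • σ) :
    ∀ α ∈ Δ, pair (dotAct Φ Δ w.symm lam) α ≤ 0 ∧ pair (w.symm σ) α ≤ 0 := by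
  intro α hα
  have hwα : w α ∈ Φ := (hΦ.weyl_apply_mem_iff hw).mpr (hΔ.subset hα)
  have hdot : pair (dotAct Φ Δ w.symm lam) α = p * pair (w.symm σ) α := by
    rw [hlink, dotAct_symm_dotAct_add, zero_add, map_smul, pair_smul]
  have hbound : p * pair (w.symm σ) α + 1 ≤ p := by
    rw [← hdot, pair_dotAct_symm_add_one hΦ hΔ hw hα]
    exact pair_add_rho_le_of_mem_closedAlcove hΦ hΔ halc hwα
  obtain ⟨n, hn⟩ := hσ (w α) hwα
  rw [← pair_symm_apply_of_mem_weyl hw] at hn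
  have hn_nonpos : n ≤ 0 := by
    rw [hn] at hbound
    have hlt : (p : ℤ) * n < p * 1 := by rw [mul_one]; exact_mod_cast hbound
    exact Int.lt_add_one_iff.mp (lt_of_mul_lt_mul_left hlt p.cast_nonneg)
  have hσ_nonpos : pair (w.symm σ) α ≤ 0 := hn ▸ Int.cast_nonpos.mpr hn_nonpos
  exact ⟨hdot ▸ mul_nonpos_of_nonneg_of_nonpos p.cast_nonneg hσ_nonpos, hσ_nonpos⟩

end Alcove

/-- Let `p` be a positive integer and `λ ∈ X⁺ ∩ C̄_ℤ` with
`λ = w·0 + pσ` for some `w ∈ W` and `σ ∈ X`.  Then for every simple root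
`α ∈ Δ` one has `(w⁻¹·λ, α∨) ≤ 0` and `(w⁻¹σ, α∨) ≤ 0`; that is, `w⁻¹·λ` and
`w⁻¹σ` are antidominant. -/
theorem statement11
    (Φ Δ : Finset E) (hΦ : IsRootSystem Φ) (hΔ : IsBase Φ Δ)
    (p : ℕ) (hp : 0 < p)
    (lam : E) (hdom : isDominant Φ Δ lam) (halc : lam ∈ closedAlcove Φ Δ p)
    (w : E ≃ₗ[ℝ] E) (hw : w ∈ Weyl Φ) (σ : E) (hσ : σ ∈ weightLattice Φ)
    (hlink : lam = dotAct Φ Δ w 0 + (p : ℝ) • σ) :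
    ∀ α ∈ Δ, pair (dotAct Φ Δ w.symm lam) α ≤ 0 ∧ pair (w.symm σ) α ≤ 0 :=
  statement11_general hΦ.isReducedRootSystem hΔ halc hw hσ hlink

end PaperDNN
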